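/- For any step of the nonsmooth HHT scheme, the variation of the algorithmic energy satisfies H_{k+1} − H_k − W_ext − W_damp = U_{k+1/2}ᵀ P_{k+1} − (1/2)h²(γ − 1/2)(2β − γ)‖a_{k+1}−a_k‖²_M − (γ − 1/2 − α)‖q_{k+1}−q_k‖²_K − 2α(1−γ)‖z_{k+1}−z_k‖²_K. -/

import Mathlib

open Matrix

/-! In terms of `v̄ = (v₁ + v₂) / 2`, the impulse drops out of the Newmark formula for the position:
`q₂ - q₁ = h v̄ + (h² / 2) (2β - γ) (a₂ - a₁)`. Since `v₂ - v₁ = h a_γ + w`, the increment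
`v̄ᵀ M (v₂ - v₁)` of the kinetic energy is therefore the work of `M a_γ` along `q₂ - q₁`, plus the
work `v̄ᵀ M w` of the impulse, plus a term `(a₂ - a₁)ᵀ M a_γ` in the accelerations. The `γ`-mean of
the two HHT balances trades `M a_γ` for the forces. The acceleration term and the work of the
stiffness force both pair an increment with a weighted mean in a symmetric form, which gives half a
difference of squares plus multiples of squared increments. -/

section Mean

variable {R V : Type*} [CommRing R] [AddCommGroup V] [Module R V]

/-- The mean `x_{k,γ} = γ x_{k+1} + (1 - γ) x_k` of the consecutive values `x = x_k`,
`y = x_{k+1}`. -/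
def gammaMean (γ : R) (x y : V) : V := γ • y + (1 - γ) • x

/-- The mean `(1 - α) x_{k,γ} + α x_{k-1,γ}` of `x₀ = x_{k-1}`, `x₁ = x_k`, `x₂ = x_{k+1}`, which
enters the external and damping work and the `γ`-mean of two HHT balances. -/
def hhtMean (γ α : R) (x₀ x₁ x₂ : V) : V :=
  (1 - α) • gammaMean γ x₁ x₂ + α • gammaMean γ x₀ x₁

theorem hhtMean_eq_gammaMean_add (γ α : R) (x₀ x₁ x₂ : V) :
    hhtMean γ α x₀ x₁ x₂ = gammaMean γ x₁ x₂ - α • (x₂ - x₁)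
      + (α * (1 - γ)) • ((x₂ - x₁) - (x₁ - x₀)) := by
  unfold hhtMean gammaMean
  module

theorem mulVec_gammaMean {m n : Type*} [Fintype n] (A : Matrix m n R) (γ : R) (x y : n → R) :
    A *ᵥ gammaMean γ x y = gammaMean γ (A *ᵥ x) (A *ᵥ y) := by
  simp only [gammaMean, mulVec_add, mulVec_smul]

theorem mulVec_hhtMean {m n : Type*} [Fintype n] (A : Matrix m n R) (γ α : R)
    (x₀ x₁ x₂ : n → R) :
    A *ᵥ hhtMean γ α x₀ x₁ x₂ = hhtMean γ α (A *ᵥ x₀) (A *ᵥ x₁) (A *ᵥ x₂) := by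
  simp only [hhtMean, mulVec_add, mulVec_smul, mulVec_gammaMean]

theorem gammaMean_hht_balance {m n : Type*} [Fintype n] {M K C : Matrix m n R} {α : R}
    {q₀ q₁ q₂ v₀ v₁ v₂ a₁ a₂ : n → R} {F₀ F₁ F₂ : m → R} (γ : R)
    (hbal₁ : M *ᵥ a₁ + (1 - α) • (K *ᵥ q₁ + C *ᵥ v₁) + α • (K *ᵥ q₀ + C *ᵥ v₀)
      = (1 - α) • F₁ + α • F₀)
    (hbal₂ : M *ᵥ a₂ + (1 - α) • (K *ᵥ q₂ + C *ᵥ v₂) + α • (K *ᵥ q₁ + C *ᵥ v₁)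
      = (1 - α) • F₂ + α • F₁) :
    M *ᵥ gammaMean γ a₁ a₂ + K *ᵥ hhtMean γ α q₀ q₁ q₂ + C *ᵥ hhtMean γ α v₀ v₁ v₂
      = hhtMean γ α F₀ F₁ F₂ := by
  rw [mulVec_gammaMean, mulVec_hhtMean, mulVec_hhtMean]
  unfold hhtMean gammaMean
  linear_combination (norm := module) γ • hbal₂ + (1 - γ) • hbal₁

end Mean

section SymmetricForm

variable {ι R : Type*} [Fintype ι] [CommRing R] {A : Matrix ι ι R}

theorem dotProduct_mulVec_comm_of_isSymm (hA : A.IsSymm) (x y : ι → R) :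
    x ⬝ᵥ A *ᵥ y = y ⬝ᵥ A *ᵥ x := by
  rw [← dotProduct_transpose_mulVec, hA.eq]

theorem add_dotProduct_mulVec_sub (hA : A.IsSymm) (x y : ι → R) :
    (x + y) ⬝ᵥ A *ᵥ (y - x) = y ⬝ᵥ A *ᵥ y - x ⬝ᵥ A *ᵥ x := by
  simp only [mulVec_sub, add_dotProduct, dotProduct_sub, dotProduct_mulVec_comm_of_isSymm hA y x]
  ring

theorem two_mul_dotProduct_mulVec_sub (hA : A.IsSymm) (x y : ι → R) :
    2 * (y ⬝ᵥ A *ᵥ (y - x))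
      = y ⬝ᵥ A *ᵥ y - x ⬝ᵥ A *ᵥ x + (y - x) ⬝ᵥ A *ᵥ (y - x) := by
  rw [← add_dotProduct_mulVec_sub hA, ← add_dotProduct, add_comm x, add_add_sub_cancel,
    add_dotProduct, two_mul]

theorem two_mul_sub_dotProduct_mulVec_gammaMean (hA : A.IsSymm) (γ : R) (x y : ι → R) :
    2 * ((y - x) ⬝ᵥ A *ᵥ gammaMean γ x y)
      = y ⬝ᵥ A *ᵥ y - x ⬝ᵥ A *ᵥ x + (2 * γ - 1) * ((y - x) ⬝ᵥ A *ᵥ (y - x)) := by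
  have hmean : gammaMean γ x y = y - (1 - γ) • (y - x) := by
    unfold gammaMean
    module
  rw [hmean, mulVec_sub, mulVec_smul, dotProduct_sub, dotProduct_smul, smul_eq_mul,
    dotProduct_mulVec_comm_of_isSymm hA]
  linear_combination two_mul_dotProduct_mulVec_sub hA x y

end SymmetricForm

section NonsmoothHHT

variable {ι κ 𝕜 : Type*} [Field 𝕜]

/-- The vector `z_j` whose stiffness form corrects the energy, for `x = q_{j-1}` and `y = q_j`. -/
def halfIncrement (x y : ι → 𝕜) : ι → 𝕜 := (1 / 2 : 𝕜) • (y - x)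

variable [Fintype ι] [Fintype κ]

/-- The algorithmic energy `H_j` at position `q`, velocity `v` and acceleration `a`, where `qPrev`
is the position one step earlier. -/
def algorithmicEnergy (M K : Matrix ι ι 𝕜) (h γ β α : 𝕜) (qPrev q v a : ι → 𝕜) : 𝕜 :=
  1 / 2 * (v ⬝ᵥ M *ᵥ v) + 1 / 2 * (q ⬝ᵥ K *ᵥ q) + h ^ 2 / 4 * (2 * β - γ) * (a ⬝ᵥ M *ᵥ a)
    + 2 * α * (1 - γ) * (halfIncrement qPrev q ⬝ᵥ K *ᵥ halfIncrement qPrev q)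

/-- The discrete work `W_ext` of the external forces `F₀`, `F₁`, `F₂` at three consecutive times
over the last step, which moves the position from `q₁` to `q₂`. -/
def externalWork (γ α : 𝕜) (q₁ q₂ F₀ F₁ F₂ : ι → 𝕜) : 𝕜 :=
  (q₂ - q₁) ⬝ᵥ hhtMean γ α F₀ F₁ F₂

/-- The discrete work `W_damp` of the viscous forces `-C v` over the step from `q₁` to `q₂`. -/
def dampingWork (C : Matrix ι ι 𝕜) (γ α : 𝕜) (q₁ q₂ v₀ v₁ v₂ : ι → 𝕜) : 𝕜 :=
  -((q₂ - q₁) ⬝ᵥ C *ᵥ hhtMean γ α v₀ v₁ v₂)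

variable [NeZero (2 : 𝕜)]

theorem newmark_position_sub {V : Type*} [AddCommGroup V] [Module 𝕜 V] {h γ β : 𝕜}
    {q₁ q₂ v₁ v₂ a₁ a₂ w : V}
    (hv : v₂ = v₁ + (h * (1 - γ)) • a₁ + (h * γ) • a₂ + w)
    (hq : q₂ = q₁ + h • v₁ + (h ^ 2 * (1 / 2 - β)) • a₁ + (h ^ 2 * β) • a₂ + (h / 2) • w) :
    q₂ - q₁ = (h / 2) • (v₁ + v₂) + (h ^ 2 / 2 * (2 * β - γ)) • (a₂ - a₁) := by
  have h2 : (2 : 𝕜) ≠ 0 := two_ne_zero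
  rw [hq, hv]
  match_scalars <;> field_simp <;> ring

theorem newmark_kinetic_variation {M : Matrix ι ι 𝕜} (hM : M.IsSymm) {h γ β : 𝕜}
    {q₁ q₂ v₁ v₂ a₁ a₂ w : ι → 𝕜}
    (hv : v₂ = v₁ + (h * (1 - γ)) • a₁ + (h * γ) • a₂ + w)
    (hq : q₂ = q₁ + h • v₁ + (h ^ 2 * (1 / 2 - β)) • a₁ + (h ^ 2 * β) • a₂ + (h / 2) • w) :
    1 / 2 * (v₂ ⬝ᵥ M *ᵥ v₂ - v₁ ⬝ᵥ M *ᵥ v₁)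
        + h ^ 2 / 4 * (2 * β - γ) * (a₂ ⬝ᵥ M *ᵥ a₂ - a₁ ⬝ᵥ M *ᵥ a₁)
      = (q₂ - q₁) ⬝ᵥ M *ᵥ gammaMean γ a₁ a₂ + 1 / 2 * ((v₁ + v₂) ⬝ᵥ M *ᵥ w)
        - 1 / 2 * h ^ 2 * (γ - 1 / 2) * (2 * β - γ) * ((a₂ - a₁) ⬝ᵥ M *ᵥ (a₂ - a₁)) := by
  have h2 : (2 : 𝕜) ≠ 0 := two_ne_zero
  have h4 : (4 : 𝕜) = 2 * 2 := by norm_num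
  have hvel : v₂ - v₁ = h • gammaMean γ a₁ a₂ + w := by
    rw [hv, gammaMean]
    module
  have hacc := two_mul_sub_dotProduct_mulVec_gammaMean hM γ a₁ a₂
  rw [← add_dotProduct_mulVec_sub hM v₁ v₂, hvel, newmark_position_sub hv hq]
  simp only [mulVec_add, mulVec_smul, dotProduct_add, dotProduct_smul, add_dotProduct (_ • _),
    smul_dotProduct, smul_eq_mul, h4]
  field_simp
  linear_combination -(h ^ 2 * (2 * β - γ)) * hacc

theorem hht_stiffness_variation {K : Matrix ι ι 𝕜} (hK : K.IsSymm) (γ α : 𝕜)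
    (q₀ q₁ q₂ : ι → 𝕜) :
    1 / 2 * (q₂ ⬝ᵥ K *ᵥ q₂ - q₁ ⬝ᵥ K *ᵥ q₁)
        + 2 * α * (1 - γ) * (halfIncrement q₁ q₂ ⬝ᵥ K *ᵥ halfIncrement q₁ q₂
          - halfIncrement q₀ q₁ ⬝ᵥ K *ᵥ halfIncrement q₀ q₁)
      = (q₂ - q₁) ⬝ᵥ K *ᵥ hhtMean γ α q₀ q₁ q₂
        - (γ - 1 / 2 - α) * ((q₂ - q₁) ⬝ᵥ K *ᵥ (q₂ - q₁))
        - 2 * α * (1 - γ) * ((halfIncrement q₁ q₂ - halfIncrement q₀ q₁) ⬝ᵥ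
            K *ᵥ (halfIncrement q₁ q₂ - halfIncrement q₀ q₁)) := by
  have h2 : (2 : 𝕜) ≠ 0 := two_ne_zero
  have hmean := two_mul_sub_dotProduct_mulVec_gammaMean hK γ q₁ q₂
  have hincr := two_mul_dotProduct_mulVec_sub hK (q₁ - q₀) (q₂ - q₁)
  rw [hhtMean_eq_gammaMean_add]
  simp only [halfIncrement, ← smul_sub, mulVec_add, mulVec_smul, dotProduct_add, dotProduct_smul,
    smul_dotProduct, smul_eq_mul, mulVec_sub K (gammaMean _ _ _),
    dotProduct_sub _ (K *ᵥ gammaMean _ _ _)]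
  field_simp
  linear_combination -hmean - α * (1 - γ) * hincr

theorem nonsmooth_HHT_algorithmic_energy_general {M K C : Matrix ι ι 𝕜} {G : Matrix ι κ 𝕜}
    (hM : M.IsSymm) (hK : K.IsSymm) {h γ β α : 𝕜}
    {q₀ q₁ q₂ v₀ v₁ v₂ a₁ a₂ F₀ F₁ F₂ w : ι → 𝕜} {P : κ → 𝕜}
    (hbal₁ : M *ᵥ a₁ + (1 - α) • (K *ᵥ q₁ + C *ᵥ v₁) + α • (K *ᵥ q₀ + C *ᵥ v₀)
      = (1 - α) • F₁ + α • F₀)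
    (hbal₂ : M *ᵥ a₂ + (1 - α) • (K *ᵥ q₂ + C *ᵥ v₂) + α • (K *ᵥ q₁ + C *ᵥ v₁)
      = (1 - α) • F₂ + α • F₁)
    (hw : M *ᵥ w = G *ᵥ P)
    (hv : v₂ = v₁ + (h * (1 - γ)) • a₁ + (h * γ) • a₂ + w)
    (hq : q₂ = q₁ + h • v₁ + (h ^ 2 * (1 / 2 - β)) • a₁ + (h ^ 2 * β) • a₂ + (h / 2) • w) :
    algorithmicEnergy M K h γ β α q₁ q₂ v₂ a₂ - algorithmicEnergy M K h γ β α q₀ q₁ v₁ a₁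
        - externalWork γ α q₁ q₂ F₀ F₁ F₂ - dampingWork C γ α q₁ q₂ v₀ v₁ v₂
      = ((1 / 2 : 𝕜) • (Gᵀ *ᵥ v₁ + Gᵀ *ᵥ v₂)) ⬝ᵥ P
        - 1 / 2 * h ^ 2 * (γ - 1 / 2) * (2 * β - γ) * ((a₂ - a₁) ⬝ᵥ M *ᵥ (a₂ - a₁))
        - (γ - 1 / 2 - α) * ((q₂ - q₁) ⬝ᵥ K *ᵥ (q₂ - q₁))
        - 2 * α * (1 - γ) * ((halfIncrement q₁ q₂ - halfIncrement q₀ q₁) ⬝ᵥ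
            K *ᵥ (halfIncrement q₁ q₂ - halfIncrement q₀ q₁)) := by
  have hwork : (q₂ - q₁) ⬝ᵥ M *ᵥ gammaMean γ a₁ a₂ + (q₂ - q₁) ⬝ᵥ K *ᵥ hhtMean γ α q₀ q₁ q₂
      + (q₂ - q₁) ⬝ᵥ C *ᵥ hhtMean γ α v₀ v₁ v₂ = (q₂ - q₁) ⬝ᵥ hhtMean γ α F₀ F₁ F₂ := by
    rw [← gammaMean_hht_balance γ hbal₁ hbal₂, dotProduct_add, dotProduct_add]
  have himpulse : ((1 / 2 : 𝕜) • (Gᵀ *ᵥ v₁ + Gᵀ *ᵥ v₂)) ⬝ᵥ P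
      = 1 / 2 * ((v₁ + v₂) ⬝ᵥ M *ᵥ w) := by
    rw [← mulVec_add, smul_dotProduct, smul_eq_mul, hw, mulVec_transpose, dotProduct_mulVec]
  rw [himpulse]
  unfold algorithmicEnergy externalWork dampingWork
  linear_combination newmark_kinetic_variation hM hv hq + hht_stiffness_variation hK γ α q₀ q₁ q₂
    + hwork

end NonsmoothHHT

/-- Variation of the algorithmic energy over one step of the nonsmooth HHT scheme. -/
theorem nonsmooth_HHT_algorithmic_energy
    (n m : ℕ) (hn : 1 ≤ n) (hm : 1 ≤ m)
    (h γ β α : ℝ) (hh : 0 < h)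
    (M K C : Matrix (Fin n) (Fin n) ℝ) (G : Matrix (Fin n) (Fin m) ℝ)
    (hM : M.PosDef) (hK : K.PosSemidef)
    (qkm1 qk qk1 vkm1 vk vk1 ak ak1 Fkm1 Fk Fk1 w : Fin n → ℝ)
    (P : Fin m → ℝ)
    (hbalk : M.mulVec ak + (1 - α) • (K.mulVec qk + C.mulVec vk)
        + α • (K.mulVec qkm1 + C.mulVec vkm1) = (1 - α) • Fk + α • Fkm1)
    (hbalk1 : M.mulVec ak1 + (1 - α) • (K.mulVec qk1 + C.mulVec vk1)
        + α • (K.mulVec qk + C.mulVec vk) = (1 - α) • Fk1 + α • Fk)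
    (hw : M.mulVec w = G.mulVec P)
    (hv : vk1 = vk + (h * (1 - γ)) • ak + (h * γ) • ak1 + w)
    (hq : qk1 = qk + h • vk + (h ^ 2 * (1/2 - β)) • ak + (h ^ 2 * β) • ak1
        + (h / 2) • w) :
    (1/2 * (vk1 ⬝ᵥ M.mulVec vk1) + 1/2 * (qk1 ⬝ᵥ K.mulVec qk1)
        + h ^ 2 / 4 * (2 * β - γ) * (ak1 ⬝ᵥ M.mulVec ak1)
        + 2 * α * (1 - γ) * (((1/2 : ℝ) • (qk1 - qk)) ⬝ᵥ K.mulVec ((1/2 : ℝ) • (qk1 - qk))))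
      - (1/2 * (vk ⬝ᵥ M.mulVec vk) + 1/2 * (qk ⬝ᵥ K.mulVec qk)
        + h ^ 2 / 4 * (2 * β - γ) * (ak ⬝ᵥ M.mulVec ak)
        + 2 * α * (1 - γ) * (((1/2 : ℝ) • (qk - qkm1)) ⬝ᵥ K.mulVec ((1/2 : ℝ) • (qk - qkm1))))
      - (qk1 - qk) ⬝ᵥ ((1 - α) • (γ • Fk1 + (1 - γ) • Fk) + α • (γ • Fk + (1 - γ) • Fkm1))
      - (-((qk1 - qk) ⬝ᵥ C.mulVec ((1 - α) • (γ • vk1 + (1 - γ) • vk)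
          + α • (γ • vk + (1 - γ) • vkm1))))
    = ((1/2 : ℝ) • (Gᵀ.mulVec vk + Gᵀ.mulVec vk1)) ⬝ᵥ P
      - 1/2 * h ^ 2 * (γ - 1/2) * (2 * β - γ) * ((ak1 - ak) ⬝ᵥ M.mulVec (ak1 - ak))
      - (γ - 1/2 - α) * ((qk1 - qk) ⬝ᵥ K.mulVec (qk1 - qk))
      - 2 * α * (1 - γ) * ((((1/2 : ℝ) • (qk1 - qk)) - ((1/2 : ℝ) • (qk - qkm1))) ⬝ᵥ
          K.mulVec (((1/2 : ℝ) • (qk1 - qk)) - ((1/2 : ℝ) • (qk - qkm1)))) :=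
  nonsmooth_HHT_algorithmic_energy_general (isHermitian_iff_isSymm.mp hM.isHermitian)
    (isHermitian_iff_isSymm.mp hK.isHermitian) hbalk hbalk1 hw hv hq
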